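/- arXiv:2508.21799 — 2 statements merged into one kernel-verified Lean document; each statement's English description precedes it below -/
import Mathlib

section
/- Let h and d be positive integers with h > d + 2, and let C_{h,d} denote the finite cyclic semigroup ⟨a | a^h = a^{h+d}⟩. A non-balanced identity u = v holds in C_{h,d} if and only if it is d-balanced and either long (i.e. |u| ≥ h and |v| ≥ h) or uniform (i.e. con(u) = con(v) and |u| = |v| ≥ h − m, where m is the minimum of min(occ(x,u), occ(x,v)) over all letters x with occ(x,u) ≠ occ(x,v)). -/
/-! An assignment of exponents `f : ℕ → ℕ` with positive values sends a word `w` to `a ^ F(w)`,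
where `F(w) = ∑ occ(x,w) f(x)` is the weight of `w` (`weight` below). So the identity `u = v` holds
in `C_{h,d}` iff for every such `f` either `F(u) = F(v)`, or both weights are at least `h` and
congruent mod `d` (`satisfiesId_iff`).

If `u = v` is `d`-balanced, the weights are always congruent mod `d`. A long identity then holds
because `F(w) ≥ |w|`. For a uniform one, either `f` is `1` on all unbalanced letters, so
`F(u) = F(v)` as `|u| = |v|`, or `f(x) ≥ 2` for an unbalanced `x`, and both weights are at least
`|u| + m ≥ h`.

Conversely, comparing the constant assignment `h` with the one raised by `1` at `x` gives
`d`-balancedness. If the identity is not long, the assignment `1` forces `|u| = |v| < h`, and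
raising the value at an unbalanced letter `x` to `2` yields weights `|u| + occ(x,u)` and
`|u| + occ(x,v)`, which are different, hence both at least `h`. -/

/-- Words over the countably infinite alphabet `ℕ`: elements of the free semigroup. -/
abbrev Word : Type := FreeSemigroup ℕ

/-- The list of letters of a word. -/
def Word.toList (w : Word) : List ℕ := w.head :: w.tail

/-- `occ x w`: the number of occurrences of the letter `x` in the word `w`. -/
def occ (x : ℕ) (w : Word) : ℕ := w.toList.count x

/-- `wlen w`: the length of the word `w`. -/
def wlen (w : Word) : ℕ := w.toList.length

/-- `con w`: the content of `w`, i.e. the set of letters occurring in `w`. -/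
def con (w : Word) : Set ℕ := {x | x ∈ w.toList}

/-- A semigroup `S` satisfies the identity `u = v` if every substitution
`φ : ℕ → S` gives both words equal values. -/
def SatisfiesId (S : Type*) [Semigroup S] (u v : Word) : Prop :=
  ∀ φ : ℕ → S, FreeSemigroup.lift φ u = FreeSemigroup.lift φ v

/-- Reduction of exponents in the cyclic semigroup `⟨a ∣ a^h = a^{h+d}⟩`:
`reduce h d e` is the unique `k` with `a^k = a^e`, `1 ≤ k ≤ h + d - 1` (for `e ≥ 1`). -/
def cycReduce (h d e : ℕ) : ℕ := if e < h then e else h + (e - h) % d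

/-- The carrier of the finite cyclic semigroup `C_{h,d}`:
the elements `a, a², …, a^{h+d-1}`, encoded by their exponents. -/
def Cyc (h d : ℕ) : Type := {n : ℕ // 1 ≤ n ∧ n ≤ h + d - 1}

theorem cycReduce_add_left (h d a b : ℕ) :
    cycReduce h d (cycReduce h d a + b) = cycReduce h d (a + b) := by
  unfold cycReduce
  by_cases h1 : a < h
  · simp [h1]
  · rw [if_neg h1, if_neg (by omega : ¬ h + (a - h) % d + b < h),
      if_neg (by omega : ¬ a + b < h)]
    have e1 : h + (a - h) % d + b - h = (a - h) % d + b := by omega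
    rw [e1, Nat.mod_add_mod]
    have e2 : a - h + b = a + b - h := by omega
    rw [e2]

/-- `C_{h,d}` is a semigroup: `a^i · a^j = a^{i+j}` if `i + j ≤ h + d - 1`, and
`a^i · a^j = a^k` with `h ≤ k ≤ h + d - 1`, `k ≡ i + j (mod d)` otherwise. -/
instance Cyc.instSemigroup (h d : ℕ) [Fact (0 < h)] [Fact (0 < d)] : Semigroup (Cyc h d) where
  mul a b := ⟨cycReduce h d (a.1 + b.1), by
    have hh : 0 < h := Fact.out
    have hd : 0 < d := Fact.out
    have ha := a.2; have hb := b.2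
    unfold cycReduce
    split_ifs with h1
    · omega
    · have : (a.1 + b.1 - h) % d < d := Nat.mod_lt _ hd
      omega⟩
  mul_assoc a b c := by
    apply Subtype.ext
    show cycReduce h d (cycReduce h d (a.1 + b.1) + c.1)
        = cycReduce h d (a.1 + cycReduce h d (b.1 + c.1))
    rw [cycReduce_add_left]
    conv_rhs => rw [Nat.add_comm a.1, cycReduce_add_left, Nat.add_comm]
    rw [Nat.add_assoc]

instance : Fact (0 < 1) := ⟨Nat.one_pos⟩

/-- The identity `u = v` is balanced: every letter occurs equally often in `u` and `v`. -/
def BalancedId (u v : Word) : Prop := ∀ x : ℕ, occ x u = occ x v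

/-- The identity `u = v` is `d`-balanced: `occ(x,u) ≡ occ(x,v) (mod d)` for every letter. -/
def DBalanced (d : ℕ) (u v : Word) : Prop := ∀ x : ℕ, occ x u ≡ occ x v [MOD d]

/-- The identity `u = v` is long with respect to `h`: `|u| ≥ h` and `|v| ≥ h`. -/
def LongId (h : ℕ) (u v : Word) : Prop := h ≤ wlen u ∧ h ≤ wlen v

/-- The minimum of `min (occ x u) (occ x v)` over all letters `x` unbalanced for `u = v`. -/
noncomputable def unbalMin (u v : Word) : ℕ :=
  sInf {n : ℕ | ∃ x : ℕ, occ x u ≠ occ x v ∧ n = min (occ x u) (occ x v)}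

/-- The identity `u = v` is uniform with respect to `h`:
`con(u) = con(v)` and `|u| = |v| ≥ h - m`, where `m = unbalMin u v`. -/
def UniformId (h : ℕ) (u v : Word) : Prop :=
  con u = con v ∧ wlen u = wlen v ∧ h - unbalMin u v ≤ wlen u

/-- The exponent `∑ occ(x,w) f(x)` of the value of `w` when each letter `x` is sent to `a ^ f x`. -/
def weight (f : ℕ → ℕ) (w : Word) : ℕ := (w.toList.map f).sum

theorem cycReduce_add_right (h d a b : ℕ) :
    cycReduce h d (a + cycReduce h d b) = cycReduce h d (a + b) := by
  rw [Nat.add_comm, cycReduce_add_left, Nat.add_comm]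

theorem cycReduce_bounds {h d e : ℕ} (hh : 0 < h) (hd : 0 < d) (he : 1 ≤ e) :
    1 ≤ cycReduce h d e ∧ cycReduce h d e ≤ h + d - 1 := by
  have := Nat.mod_lt (e - h) hd
  unfold cycReduce
  split_ifs <;> omega

theorem cycReduce_of_le {h d e : ℕ} (hd : 0 < d) (he : e ≤ h + d - 1) : cycReduce h d e = e := by
  unfold cycReduce
  split_ifs with h1
  · rfl
  · rw [Nat.mod_eq_of_lt (by omega)]
    omega

theorem cycReduce_eq_iff {h d a b : ℕ} :
    cycReduce h d a = cycReduce h d b ↔ a = b ∨ (h ≤ a ∧ h ≤ b ∧ a ≡ b [MOD d]) := by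
  have key : h ≤ a → h ≤ b → ((a - h) % d = (b - h) % d ↔ a ≡ b [MOD d]) := by
    intro ha hb
    obtain ⟨a, rfl⟩ := Nat.exists_eq_add_of_le ha
    obtain ⟨b, rfl⟩ := Nat.exists_eq_add_of_le hb
    rw [Nat.add_sub_cancel_left, Nat.add_sub_cancel_left]
    exact ⟨fun H => Nat.ModEq.add_left h H, fun H => Nat.ModEq.add_left_cancel' h H⟩
  unfold cycReduce
  split_ifs with h1 h2 h2
  · omega
  · omega
  · omega
  · rw [Nat.add_left_cancel_iff, key (by omega) (by omega)]
    constructor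
    · exact fun H => Or.inr ⟨by omega, by omega, H⟩
    · rintro (rfl | H)
      · exact Nat.ModEq.refl _
      · exact H.2.2

theorem cycReduce_sum_map (h d : ℕ) (f : ℕ → ℕ) (l : List ℕ) :
    cycReduce h d (l.map fun x => cycReduce h d (f x)).sum = cycReduce h d (l.map f).sum := by
  induction l with
  | nil => rfl
  | cons x l ih =>
    rw [List.map_cons, List.map_cons, List.sum_cons, List.sum_cons, cycReduce_add_left,
      ← cycReduce_add_right, ih, cycReduce_add_right]

/-- The value of a word under a substitution is `a` to the reduced weight of the word. -/
theorem lift_val (h d : ℕ) [Fact (0 < h)] [Fact (0 < d)] (φ : ℕ → Cyc h d) (w : Word) :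
    (FreeSemigroup.lift φ w).1 = cycReduce h d (weight (fun x => (φ x).1) w) := by
  induction w using FreeSemigroup.recOnMul with
  | ih1 x =>
    rw [FreeSemigroup.lift_of]
    have : weight (fun x => (φ x).1) (FreeSemigroup.of x) = (φ x).1 := by
      simp [weight, Word.toList, FreeSemigroup.of]
    rw [this, cycReduce_of_le Fact.out (φ x).2.2]
  | ih2 x y _ ih =>
    rw [map_mul, FreeSemigroup.lift_of]
    have : weight (fun x => (φ x).1) (FreeSemigroup.of x * y)
        = (φ x).1 + weight (fun x => (φ x).1) y := by
      simp [weight, Word.toList, FreeSemigroup.of]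
    rw [this, ← cycReduce_add_right, ← ih]
    rfl

/-- Reformulation of satisfaction in `C_{h,d}` by weights, for exponents not bounded by
`h + d - 1`. -/
theorem satisfiesId_iff (h d : ℕ) [Fact (0 < h)] [Fact (0 < d)] (u v : Word) :
    SatisfiesId (Cyc h d) u v ↔ ∀ f : ℕ → ℕ, (∀ x, 1 ≤ f x) →
      weight f u = weight f v ∨
        (h ≤ weight f u ∧ h ≤ weight f v ∧ weight f u ≡ weight f v [MOD d]) := by
  constructor
  · intro H f hf
    -- Arbitrary positive exponents are admissible, since they may be reduced first.
    let φ : ℕ → Cyc h d := fun x =>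
      ⟨cycReduce h d (f x), cycReduce_bounds Fact.out Fact.out (hf x)⟩
    have := congrArg Subtype.val (H φ)
    rw [lift_val, lift_val] at this
    simp only [φ, weight, cycReduce_sum_map] at this
    exact cycReduce_eq_iff.1 this
  · intro H φ
    apply Subtype.ext
    rw [lift_val, lift_val]
    exact cycReduce_eq_iff.2 (H _ fun x => (φ x).2.1)

theorem weight_eq_sum (f : ℕ → ℕ) (w : Word) (s : Finset ℕ) (hs : w.toList.toFinset ⊆ s) :
    weight f w = ∑ x ∈ s, occ x w * f x := by
  rw [weight, Finset.sum_list_map_count]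
  simp only [smul_eq_mul]
  apply Finset.sum_subset hs
  intro x _ hx
  rw [List.count_eq_zero_of_not_mem (by simpa using hx), Nat.zero_mul]

theorem weight_add (f g : ℕ → ℕ) (w : Word) :
    weight (fun x => f x + g x) w = weight f w + weight g w :=
  List.sum_map_add

theorem weight_const (c : ℕ) (w : Word) : weight (fun _ => c) w = wlen w * c := by
  simp [weight, wlen]

theorem weight_indicator (x : ℕ) (w : Word) :
    weight (fun y => if y = x then 1 else 0) w = occ x w := by
  rw [weight_eq_sum _ _ (insert x w.toList.toFinset) (Finset.subset_insert _ _)]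
  simp

theorem weight_mono {f g : ℕ → ℕ} (hfg : ∀ x, f x ≤ g x) (w : Word) : weight f w ≤ weight g w :=
  List.sum_le_sum fun x _ => hfg x

theorem wlen_le_weight {f : ℕ → ℕ} (hf : ∀ x, 1 ≤ f x) (w : Word) : wlen w ≤ weight f w := by
  have := weight_mono hf w
  rwa [weight_const, Nat.mul_one] at this

theorem wlen_add_occ_le_weight {f : ℕ → ℕ} (hf : ∀ x, 1 ≤ f x) {x : ℕ} (hx : 2 ≤ f x)
    (w : Word) : wlen w + occ x w ≤ weight f w := by
  rw [← Nat.mul_one (wlen w), ← weight_const, ← weight_indicator, ← weight_add]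
  apply weight_mono
  intro y
  have := hf y
  split_ifs with hy
  · exact hy ▸ hx
  · exact this

theorem weight_modEq {d : ℕ} {u v : Word} (hb : DBalanced d u v) (f : ℕ → ℕ) :
    weight f u ≡ weight f v [MOD d] := by
  rw [weight_eq_sum f u (u.toList.toFinset ∪ v.toList.toFinset) Finset.subset_union_left,
    weight_eq_sum f v (u.toList.toFinset ∪ v.toList.toFinset) Finset.subset_union_right]
  generalize u.toList.toFinset ∪ v.toList.toFinset = s
  induction s using Finset.induction_on with
  | empty => exact Nat.ModEq.refl _
  | insert x s hx ih =>
    rw [Finset.sum_insert hx, Finset.sum_insert hx]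
    exact ((hb x).mul_right _).add ih

theorem weight_eq_of_unbalanced_one {u v : Word} (hlen : wlen u = wlen v) {f : ℕ → ℕ}
    (hf : ∀ x, 1 ≤ f x) (h1 : ∀ x, occ x u ≠ occ x v → f x = 1) : weight f u = weight f v := by
  have hfg : f = fun x => 1 + (f x - 1) := by
    funext x
    have := hf x
    omega
  rw [hfg, weight_add, weight_add, weight_const, weight_const, hlen]
  congr 1
  rw [weight_eq_sum _ u (u.toList.toFinset ∪ v.toList.toFinset) Finset.subset_union_left,
    weight_eq_sum _ v (u.toList.toFinset ∪ v.toList.toFinset) Finset.subset_union_right]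
  apply Finset.sum_congr rfl
  intro x _
  by_cases hx : occ x u = occ x v
  · rw [hx]
  · simp [h1 x hx]

theorem mem_con_iff (x : ℕ) (w : Word) : x ∈ con w ↔ 0 < occ x w :=
  List.count_pos_iff.symm

theorem unbalMin_le {u v : Word} {x : ℕ} (hx : occ x u ≠ occ x v) :
    unbalMin u v ≤ min (occ x u) (occ x v) :=
  Nat.sInf_le ⟨x, hx, rfl⟩

theorem dBalanced_of_satisfiesId {h d : ℕ} [Fact (0 < h)] [Fact (0 < d)] {u v : Word}
    (H : SatisfiesId (Cyc h d) u v) : DBalanced d u v := by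
  rw [satisfiesId_iff] at H
  have hh : 0 < h := Fact.out
  have modEq : ∀ f : ℕ → ℕ, (∀ x, 1 ≤ f x) → weight f u ≡ weight f v [MOD d] := by
    intro f hf
    rcases H f hf with e | e
    · rw [e]
    · exact e.2.2
  intro x
  have A := modEq (fun _ => h) fun _ => hh
  have B := modEq (fun y => h + if y = x then 1 else 0) fun y => by omega
  rw [weight_add, weight_add, weight_indicator, weight_indicator] at B
  exact A.add_left_cancel B

theorem uniformId_of_satisfiesId {h d : ℕ} [Fact (0 < h)] [Fact (0 < d)] {u v : Word}
    (hnb : ¬ BalancedId u v) (H : SatisfiesId (Cyc h d) u v) (hl : ¬ LongId h u v) :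
    UniformId h u v := by
  rw [satisfiesId_iff] at H
  have hlen : wlen u = wlen v ∧ wlen u < h := by
    have := H (fun _ => 1) fun _ => le_rfl
    simp only [weight_const, Nat.mul_one] at this
    unfold LongId at hl
    omega
  have hle : ∀ x, occ x u ≠ occ x v → h ≤ wlen u + min (occ x u) (occ x v) := by
    intro x hx
    have := H (fun y => 1 + if y = x then 1 else 0) fun y => by omega
    rw [weight_add, weight_add, weight_indicator, weight_indicator, weight_const,
      weight_const] at this
    omega
  refine ⟨?_, hlen.1, ?_⟩
  · ext x
    rw [mem_con_iff, mem_con_iff]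
    have := hle x
    omega
  · obtain ⟨x, hx⟩ := not_forall.1 hnb
    -- The set defining `unbalMin` is nonempty, so its infimum is attained.
    obtain ⟨y, hy, e⟩ := Nat.sInf_mem
      (s := {n : ℕ | ∃ x : ℕ, occ x u ≠ occ x v ∧ n = min (occ x u) (occ x v)}) ⟨_, x, hx, rfl⟩
    change unbalMin u v = _ at e
    have := hle y hy
    omega

/-- For `h > d + 2`, a non-balanced identity `u = v` holds in the finite cyclic semigroup
`C_{h,d} = ⟨a ∣ a^h = a^{h+d}⟩` if and only if it is `d`-balanced and either long or
uniform with respect to `h`. -/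
theorem identities_of_cyclic_semigroup_large_index (h d : ℕ) [Fact (0 < h)] [Fact (0 < d)]
    (hhd : d + 2 < h) (u v : Word) (hnb : ¬ BalancedId u v) :
    SatisfiesId (Cyc h d) u v ↔ DBalanced d u v ∧ (LongId h u v ∨ UniformId h u v) := by
  constructor
  · intro H
    exact ⟨dBalanced_of_satisfiesId H,
      or_iff_not_imp_left.2 (uniformId_of_satisfiesId hnb H)⟩
  · rintro ⟨hb, hlu⟩
    rw [satisfiesId_iff]
    intro f hf
    rcases hlu with ⟨hu, hv⟩ | ⟨-, hlen, hm⟩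
    · exact Or.inr ⟨hu.trans (wlen_le_weight hf u), hv.trans (wlen_le_weight hf v),
        weight_modEq hb f⟩
    · by_cases h1 : ∀ x, occ x u ≠ occ x v → f x = 1
      · exact Or.inl (weight_eq_of_unbalanced_one hlen hf h1)
      · push Not at h1
        obtain ⟨x, hx, hfx⟩ := h1
        have h2 : 2 ≤ f x := by
          have := hf x
          omega
        have hu := wlen_add_occ_le_weight hf h2 u
        have hv := wlen_add_occ_le_weight hf h2 v
        have := unbalMin_le hx
        exact Or.inr ⟨by omega, by omega, weight_modEq hb f⟩
end

section
/- Let h and d be positive integers with h ≤ d + 2. If a non-balanced identity u = v is d-balanced and long with respect to h (i.e. |u| ≥ h and |v| ≥ h), then u = v holds in every semigroup satisfying the commutative law xy = yx and the identity Φ_{h,d}: x^d x_1 ⋯ x_h = x_1 ⋯ x_h (with x, x_1, …, x_h distinct letters). -/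
/-- Left-hand side `xy` of the commutative law, with `x := 0`, `y := 1`. -/
def commLHS : Word := ⟨0, [1]⟩

/-- Right-hand side `yx` of the commutative law, with `x := 0`, `y := 1`. -/
def commRHS : Word := ⟨1, [0]⟩

/-- Left-hand side `x^d x₁ ⋯ x_h` of the identity `Φ_{h,d}`,
with the distinct letters `x := 0`, `xᵢ := i` for `i = 1, …, h`. -/
def phiLHS (h d : ℕ) : Word := ⟨0, List.replicate (d - 1) 0 ++ (List.range h).map (· + 1)⟩

/-- Right-hand side `x₁ ⋯ x_h` of the identity `Φ_{h,d}`, with `xᵢ := i`. -/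
def phiRHS (h : ℕ) : Word := ⟨1, (List.range (h - 1)).map (· + 2)⟩

theorem coe_lift_eq_prod {S : Type*} [CommSemigroup S] (φ : ℕ → S) (w : Word) :
    ((FreeSemigroup.lift φ w : S) : WithOne S)
      = (w.toList.map (fun x => (φ x : WithOne S))).prod := by
  induction w using FreeSemigroup.recOnMul with
  | ih1 x => simp [Word.toList]
  | ih2 x y h1 h2 =>
    rw [map_mul, WithOne.coe_mul, h2, FreeSemigroup.lift_of]
    simp [Word.toList]

/-- By `Φ_{h,d}`, a `d`-th power is absorbed by every product of at least `h` factors. -/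
theorem pow_mul_prod_of_phi {S : Type*} [CommSemigroup S] {h d : ℕ} (hh : 0 < h) (hd : 0 < d)
    (hphi : SatisfiesId S (phiLHS h d) (phiRHS h)) (l : List S) (hl : h ≤ l.length) (s : S) :
    (s : WithOne S) ^ d * (l.map (fun t : S => (t : WithOne S))).prod
      = (l.map (fun t : S => (t : WithOne S))).prod := by
  -- Substitute `s` for `x` and the first `h` entries of `l` for `x₁, …, x_h`.
  have key := congrArg (fun t : S => (t : WithOne S))
    (hphi (fun n => if n = 0 then s else l.getD (n - 1) s))
  simp only [coe_lift_eq_prod] at key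
  have htake : (List.range h).map (fun i => l.getD i s) = l.take h := by
    apply List.ext_getElem
    · simp [hl]
    · intro i h1 h2
      have hi : i < l.length := by simp at h1; omega
      simp [List.getD_eq_getElem?_getD, hi]
  have hL : (phiLHS h d).toList = List.replicate d 0 ++ (List.range h).map (· + 1) := by
    obtain ⟨e, rfl⟩ : ∃ e, d = e + 1 := ⟨d - 1, by omega⟩
    simp [phiLHS, Word.toList, List.replicate_succ]
  have hR : (phiRHS h).toList = (List.range h).map (· + 1) := by
    obtain ⟨e, rfl⟩ : ∃ e, h = e + 1 := ⟨h - 1, by omega⟩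
    simp [phiRHS, Word.toList, List.range_succ_eq_map, Function.comp_def]
  have hP : ((List.range h).map (· + 1)).map
      (fun n => (((if n = 0 then s else l.getD (n - 1) s : S)) : WithOne S))
      = (l.take h).map (fun t : S => (t : WithOne S)) := by
    rw [← htake]
    simp [Function.comp_def]
  rw [hL, hR, List.map_append, List.prod_append, hP] at key
  simp only [List.map_replicate, List.prod_replicate, if_true] at key
  rw [← List.take_append_drop h l, List.map_append, List.prod_append, ← mul_assoc, key]

/-- If `s ^ d * P = P` for all `s`, where `P` is the value of the word `w`, then the exponents of
`P` may be raised by multiples of `d`, from `occ x w` to `m x`. -/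
theorem raise_exponents {M : Type*} [CommMonoid M] {d : ℕ} (f : ℕ → M) (w : Word)
    (habs : ∀ x, f x ^ d * (w.toList.map f).prod = (w.toList.map f).prod)
    (F : Finset ℕ) (hF : w.toList.toFinset ⊆ F) (m : ℕ → ℕ)
    (hle : ∀ x, occ x w ≤ m x) (hmod : ∀ x, d ∣ m x - occ x w) :
    (w.toList.map f).prod = ∏ x ∈ F, f x ^ m x := by
  have hpow : ∀ x k, f x ^ (d * k) * (w.toList.map f).prod = (w.toList.map f).prod := by
    intro x k
    induction k with
    | zero => simp
    | succ k ih => rw [mul_add, mul_one, pow_add, mul_assoc, habs, ih]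
  have hprod : ∀ G : Finset ℕ,
      (∏ x ∈ G, f x ^ (m x - occ x w)) * (w.toList.map f).prod = (w.toList.map f).prod := by
    intro G
    induction G using Finset.induction_on with
    | empty => simp
    | insert a G ha ih =>
      obtain ⟨k, hk⟩ := hmod a
      rw [Finset.prod_insert ha, mul_assoc, ih, hk, hpow]
  have hval : (w.toList.map f).prod = ∏ x ∈ F, f x ^ occ x w := by
    rw [Finset.prod_list_map_count]
    refine Finset.prod_subset hF fun x _ hx => ?_
    rw [List.mem_toFinset] at hx
    rw [List.count_eq_zero_of_not_mem hx, pow_zero]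
  rw [← hprod F]
  conv_lhs => rw [hval]
  rw [← Finset.prod_mul_distrib]
  refine Finset.prod_congr rfl fun x _ => ?_
  rw [← pow_add, Nat.sub_add_cancel (hle x)]

/-- For `h ≤ d + 2`, every non-balanced identity that is `d`-balanced and long with
respect to `h` holds in every semigroup satisfying the commutative law and `Φ_{h,d}`. -/
theorem dbalanced_long_follows_from_comm_phi (h d : ℕ) (hh : 0 < h) (hd : 0 < d)
    (hhd : h ≤ d + 2) (u v : Word) (hnb : ¬ BalancedId u v) (hdb : DBalanced d u v)
    (hlong : LongId h u v) :
    ∀ (S : Type u) [Semigroup S], SatisfiesId S commLHS commRHS →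
      SatisfiesId S (phiLHS h d) (phiRHS h) → SatisfiesId S u v := by
  intro S _ hcomm hphi φ
  let _ : CommSemigroup S :=
    { ‹Semigroup S› with
      mul_comm := fun a b => by
        simpa [commLHS, commRHS, FreeSemigroup.lift] using hcomm (fun n => if n = 0 then a else b) }
  have habs : ∀ w : Word, h ≤ wlen w → ∀ x,
      (φ x : WithOne S) ^ d * (w.toList.map (fun x => (φ x : WithOne S))).prod
        = (w.toList.map (fun x => (φ x : WithOne S))).prod := by
    intro w hw x
    have := pow_mul_prod_of_phi hh hd hphi (w.toList.map φ) (by simpa [wlen] using hw) (φ x)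
    simpa [Function.comp_def] using this
  apply WithOne.coe_injective
  rw [coe_lift_eq_prod, coe_lift_eq_prod,
    raise_exponents _ u (habs u hlong.1) (u.toList.toFinset ∪ v.toList.toFinset)
      Finset.subset_union_left (fun x => max (occ x u) (occ x v)) (fun x => le_max_left _ _) ?_,
    raise_exponents _ v (habs v hlong.2) (u.toList.toFinset ∪ v.toList.toFinset)
      Finset.subset_union_right (fun x => max (occ x u) (occ x v)) (fun x => le_max_right _ _) ?_]
  · intro x
    rcases le_total (occ x u) (occ x v) with hx | hx
    · simp [max_eq_right hx]
    · rw [max_eq_left hx]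
      exact (Nat.modEq_iff_dvd' hx).1 (hdb x).symm
  · intro x
    rcases le_total (occ x u) (occ x v) with hx | hx
    · rw [max_eq_right hx]
      exact (Nat.modEq_iff_dvd' hx).1 (hdb x)
    · simp [max_eq_left hx]
end
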